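/- arXiv:cs/0607014 — 2 statements merged into one kernel-verified Lean document; each statement's English description precedes it below -/
import Mathlib

section
/- Let f : Ω^n → ℝ be the function mapping a sample (x_1,...,x_n) to ξ_k − ξ̃_k, the total P-probability of atoms of probability less than n^{-3/4} appearing exactly k times. Then f has bounded differences: changing one coordinate of the sample changes f by at most 2 n^{-3/4}. Consequently, by the Azuma–Hoeffding inequality, Pr(|f − E f| ≥ ε) ≤ 2 exp(−ε² √n / 8) for i.i.d. inputs. -/
/-!
For each sample, `lowMass` is a sum over atoms `ω`, and the term of `ω` depends only on the number of
occurrences of `ω` in the sample. Replacing the `j`-th point `x j` by `x' j` changes the counts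
of `x j` and `x' j` only, and each term lies in `[0, n ^ (-3/4)]`; hence the bounded differences
with constant `c = 2 n ^ (-3/4)` (`abs_lowMass_sub_le`).

The concentration follows from the Azuma–Hoeffding inequality for functions of independent
variables (`hasSubgaussianMGF_of_boundedDiff`): a function `f` of `n` independent variables with
differences at most `c` satisfies `E exp (t (f - E f)) ≤ exp (n c² t² / 2)`. It is proved by
induction on `n`: conditionally on the first coordinate `a`, the induction hypothesis controls
`f - g a`, where `g a` is the conditional mean, and `g` itself varies by at most `c`, so that
Hoeffding's lemma applies to it. Chernoff's bound applied to `f` and `-f` gives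
`2 exp (-ε² / (2 n c²))`, and `n c² = 4 / √n`.

Since `Ω` may be uncountable, the measurability of `lowMass` rests on the countability of the set of
atoms of positive mass.
-/

open scoped Classical

open MeasureTheory Finset

/-- The total `P`-probability of atoms of probability less than `n^{-3/4}`
appearing exactly `k` times in the sample `x`. -/
noncomputable def lowMass {Ω : Type*} [MeasurableSpace Ω] (P : Measure Ω)
    (n k : ℕ) (x : Fin n → Ω) : ℝ :=
  ∑' ω : Ω,
    (if 0 < (P {ω}).toReal ∧ (P {ω}).toReal < (n : ℝ) ^ (-(3 : ℝ) / 4) ∧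
        (Finset.univ.filter fun i => x i = ω).card = k
      then (P {ω}).toReal else 0)

open ProbabilityTheory

section Azuma

variable {Ω : Type*} [MeasurableSpace Ω]

lemma integrable_of_abs_le {α : Type*} [MeasurableSpace α] {μ : Measure α} [IsFiniteMeasure μ]
    {f : α → ℝ} (hf : Measurable f) {M : ℝ} (hM : ∀ x, |f x| ≤ M) : Integrable f μ :=
  Integrable.of_bound hf.aestronglyMeasurable M (.of_forall hM)

lemma integrable_exp_of_abs_le {α : Type*} [MeasurableSpace α] {μ : Measure α} [IsFiniteMeasure μ]
    {f : α → ℝ} (hf : Measurable f) {M : ℝ} (hM : ∀ x, |f x| ≤ M) (t b : ℝ) :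
    Integrable (fun x => Real.exp (t * (f x - b))) μ := by
  refine integrable_of_abs_le (M := Real.exp (|t| * (M + |b|))) (by fun_prop) fun x => ?_
  rw [Real.abs_exp]
  refine Real.exp_le_exp.2 ((le_abs_self _).trans ?_)
  rw [abs_mul]
  gcongr
  exact (abs_sub _ _).trans (by linarith [hM x])

/-- Hoeffding's lemma for a function of oscillation at most `c`, with the variance proxy `c²`
obtained from the inclusion of its range in `[g x₀ - c, g x₀ + c]`. -/
lemma hoeffding_of_oscillation (P : Measure Ω) [IsProbabilityMeasure P] {c : ℝ}
    {g : Ω → ℝ} (hg : Measurable g) (hosc : ∀ a b, |g a - g b| ≤ c) (t : ℝ) :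
    ∫ a, Real.exp (t * (g a - ∫ b, g b ∂P)) ∂P ≤ Real.exp (c ^ 2 * t ^ 2 / 2) := by
  obtain ⟨x₀⟩ := nonempty_of_isProbabilityMeasure P
  have h := (hasSubgaussianMGF_of_mem_Icc (μ := P) (a := g x₀ - c) (b := g x₀ + c) hg.aemeasurable
    (.of_forall fun a => by
      have := abs_le.1 (hosc a x₀)
      exact ⟨by linarith, by linarith⟩)).mgf_le t
  have e : (((‖(g x₀ + c) - (g x₀ - c)‖₊ / 2) ^ 2 : NNReal) : ℝ) = c ^ 2 := by
    have : (g x₀ + c) - (g x₀ - c) = 2 * c := by ring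
    rw [this]
    push_cast
    rw [Real.norm_eq_abs, abs_mul, abs_two, mul_div_cancel_left₀ _ two_ne_zero, sq_abs]
  rw [e] at h
  exact h

/-- The moment generating function bound behind the Azuma–Hoeffding inequality for a function of
`n` independent variables with differences at most `c`. -/
lemma integral_exp_le_of_boundedDiff (P : Measure Ω) [IsProbabilityMeasure P] {c : ℝ} (t : ℝ) :
    ∀ (n : ℕ) (f : (Fin n → Ω) → ℝ), Measurable f → ∀ M : ℝ, (∀ x, |f x| ≤ M) →
      (∀ (x x' : Fin n → Ω) (j : Fin n), (∀ i, i ≠ j → x i = x' i) → |f x - f x'| ≤ c) →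
      ∫ x, Real.exp (t * (f x - ∫ y, f y ∂(Measure.pi fun _ : Fin n => P)))
        ∂(Measure.pi fun _ : Fin n => P) ≤ Real.exp (n * (c ^ 2 * t ^ 2 / 2)) := by
  intro n
  induction n with
  | zero =>
    intro f hf M hM hd
    have hcst : ∀ x, f x = f default := fun x => by rw [Subsingleton.elim x default]
    simp [hcst]
  | succ n ih =>
    intro f hf M hM hd
    set Q := Measure.pi fun _ : Fin n => P
    let e := MeasurableEquiv.piFinSuccAbove (fun _ : Fin (n + 1) => Ω) 0
    have hmp : MeasurePreserving e.symm (P.prod Q) (Measure.pi fun _ : Fin (n + 1) => P) :=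
      (measurePreserving_piFinSuccAbove (fun _ : Fin (n + 1) => P) 0).symm
    have he0 : ∀ a y, e.symm (a, y) 0 = a := fun a y => by
      simp [e, MeasurableEquiv.piFinSuccAbove_symm_apply, Fin.insertNthEquiv]
    have he1 : ∀ a y i, e.symm (a, y) (Fin.succ i) = y i := fun a y i => by
      simp [e, MeasurableEquiv.piFinSuccAbove_symm_apply, Fin.insertNthEquiv]
    let F : Ω × (Fin n → Ω) → ℝ := fun p => f (e.symm p)
    have hF : Measurable F := hf.comp e.symm.measurable
    have hFM : ∀ p, |F p| ≤ M := fun p => hM _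
    have hFi : Integrable F (P.prod Q) := integrable_of_abs_le hF hFM
    have hFa : ∀ a, Measurable fun y => F (a, y) := fun a => hF.comp measurable_prodMk_left
    have hFai : ∀ a, Integrable (fun y => F (a, y)) Q := fun a =>
      integrable_of_abs_le (hFa a) fun y => hFM _
    let g : Ω → ℝ := fun a => ∫ y, F (a, y) ∂Q
    have hg : Measurable g := hF.stronglyMeasurable.integral_prod_right'.measurable
    have hbd : ∀ h : (Fin n → Ω) → ℝ, ∀ C : ℝ, (∀ y, |h y| ≤ C) → |∫ y, h y ∂Q| ≤ C := by
      intro h C hC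
      simpa using norm_integral_le_of_norm_le_const (μ := Q) (f := h) (.of_forall hC)
    have hgM : ∀ a, |g a| ≤ M := fun a => hbd _ _ fun y => hFM _
    have hgc : ∀ a b, |g a - g b| ≤ c := by
      intro a b
      simp only [g]
      rw [← integral_sub (hFai a) (hFai b)]
      refine hbd _ _ fun y => hd _ _ 0 fun i hi => ?_
      obtain ⟨i, rfl⟩ := Fin.exists_succ_eq.2 hi
      rw [he1, he1]
    have hmean : ∫ y, f y ∂(Measure.pi fun _ : Fin (n + 1) => P) = ∫ a, g a ∂P := by
      rw [← hmp.integral_comp' f]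
      exact integral_prod F hFi
    rw [hmean, ← hmp.integral_comp']
    set m := ∫ a, g a ∂P
    have hint : Integrable (fun p => Real.exp (t * (F p - m))) (P.prod Q) :=
      integrable_exp_of_abs_le hF hFM t m
    change ∫ p, Real.exp (t * (F p - m)) ∂(P.prod Q) ≤ _
    rw [integral_prod _ hint]
    have hstep : ∀ a, ∫ y, Real.exp (t * (F (a, y) - m)) ∂Q ≤
        Real.exp (t * (g a - m)) * Real.exp (n * (c ^ 2 * t ^ 2 / 2)) := by
      intro a
      have h1 : ∀ y, Real.exp (t * (F (a, y) - m)) =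
          Real.exp (t * (g a - m)) * Real.exp (t * (F (a, y) - g a)) := fun y => by
        rw [← Real.exp_add]; congr 1; ring
      simp_rw [h1]
      rw [integral_const_mul]
      refine mul_le_mul_of_nonneg_left ?_ (Real.exp_nonneg _)
      refine ih (fun y => F (a, y)) (hFa a) M (fun y => hFM _) fun y y' j hy => ?_
      refine hd _ _ j.succ fun i hi => ?_
      induction i using Fin.cases with
      | zero => rw [he0, he0]
      | succ i =>
        rw [he1, he1]
        exact hy i fun h => hi (by rw [h])
    calc ∫ a, ∫ y, Real.exp (t * (F (a, y) - m)) ∂Q ∂P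
        ≤ ∫ a, Real.exp (t * (g a - m)) * Real.exp (n * (c ^ 2 * t ^ 2 / 2)) ∂P :=
          integral_mono hint.integral_prod_left
            ((integrable_exp_of_abs_le hg hgM t m).mul_const _) hstep
      _ = (∫ a, Real.exp (t * (g a - m)) ∂P) * Real.exp (n * (c ^ 2 * t ^ 2 / 2)) :=
          integral_mul_const _ _
      _ ≤ Real.exp (c ^ 2 * t ^ 2 / 2) * Real.exp (n * (c ^ 2 * t ^ 2 / 2)) :=
          mul_le_mul_of_nonneg_right (hoeffding_of_oscillation P hg hgc t) (Real.exp_nonneg _)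
      _ = Real.exp ((n + 1 : ℕ) * (c ^ 2 * t ^ 2 / 2)) := by
          rw [← Real.exp_add]; congr 1; push_cast; ring

lemma hasSubgaussianMGF_of_boundedDiff (P : Measure Ω) [IsProbabilityMeasure P] {c : ℝ} (n : ℕ)
    (f : (Fin n → Ω) → ℝ) (hf : Measurable f) (M : ℝ) (hM : ∀ x, |f x| ≤ M)
    (hd : ∀ (x x' : Fin n → Ω) (j : Fin n), (∀ i, i ≠ j → x i = x' i) → |f x - f x'| ≤ c) :
    HasSubgaussianMGF (fun x => f x - ∫ y, f y ∂(Measure.pi fun _ : Fin n => P))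
      (n * ‖c‖₊ ^ 2) (Measure.pi fun _ : Fin n => P) where
  integrable_exp_mul t := integrable_exp_of_abs_le hf hM t _
  mgf_le t := by
    refine (integral_exp_le_of_boundedDiff P t n f hf M hM hd).trans (le_of_eq ?_)
    congr 1
    push_cast
    rw [Real.norm_eq_abs, sq_abs]
    ring

end Azuma

section LowMass

variable {Ω : Type*} [MeasurableSpace Ω]

/-- The contribution of the atom `ω` to `lowMass P n k x`. -/
noncomputable def lowMassTerm (P : Measure Ω) (n k : ℕ) (x : Fin n → Ω) (ω : Ω) : ℝ :=
  if 0 < (P {ω}).toReal ∧ (P {ω}).toReal < (n : ℝ) ^ (-(3 : ℝ) / 4) ∧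
      (Finset.univ.filter fun i => x i = ω).card = k
    then (P {ω}).toReal else 0

variable (P : Measure Ω) (n k : ℕ)

lemma lowMassTerm_nonneg (x : Fin n → Ω) (ω : Ω) : 0 ≤ lowMassTerm P n k x ω := by
  unfold lowMassTerm; split_ifs <;> positivity

lemma lowMassTerm_le (x : Fin n → Ω) (ω : Ω) : lowMassTerm P n k x ω ≤ (P {ω}).toReal := by
  unfold lowMassTerm; split_ifs <;> simp

lemma lowMassTerm_le_rpow (x : Fin n → Ω) (ω : Ω) :
    lowMassTerm P n k x ω ≤ (n : ℝ) ^ (-(3 : ℝ) / 4) := by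
  unfold lowMassTerm
  split_ifs with h
  · exact h.2.1.le
  · positivity

lemma lowMassTerm_congr {x x' : Fin n → Ω} {j : Fin n} (h : ∀ i, i ≠ j → x i = x' i) {ω : Ω}
    (h1 : ω ≠ x j) (h2 : ω ≠ x' j) : lowMassTerm P n k x ω = lowMassTerm P n k x' ω := by
  have : (Finset.univ.filter fun i => x i = ω) = Finset.univ.filter fun i => x' i = ω := by
    ext i
    by_cases hi : i = j
    · subst hi
      simp [h1.symm, h2.symm]
    · simp [h i hi]
  unfold lowMassTerm
  rw [this]

variable [MeasurableSingletonClass Ω] [IsProbabilityMeasure P]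

lemma tsum_atoms_le_one : ∑' ω : Ω, P {ω} ≤ 1 :=
  (tsum_meas_le_meas_iUnion_of_disjoint P (fun ω => measurableSet_singleton ω)
    (fun a b hab => by simpa using hab)).trans prob_le_one

lemma tsum_atoms_ne_top : ∑' ω : Ω, P {ω} ≠ ⊤ :=
  ((tsum_atoms_le_one P).trans_lt ENNReal.one_lt_top).ne

lemma summable_lowMassTerm (x : Fin n → Ω) : Summable (lowMassTerm P n k x) :=
  Summable.of_nonneg_of_le (lowMassTerm_nonneg P n k x) (lowMassTerm_le P n k x)
    (ENNReal.summable_toReal (tsum_atoms_ne_top P))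

lemma abs_lowMass_le_one (x : Fin n → Ω) : |lowMass P n k x| ≤ 1 := by
  have h0 : 0 ≤ lowMass P n k x := tsum_nonneg (lowMassTerm_nonneg P n k x)
  rw [abs_of_nonneg h0]
  calc lowMass P n k x ≤ ∑' ω, (P {ω}).toReal :=
        (summable_lowMassTerm P n k x).tsum_le_tsum (lowMassTerm_le P n k x)
          (ENNReal.summable_toReal (tsum_atoms_ne_top P))
    _ = (∑' ω, P {ω}).toReal := (ENNReal.tsum_toReal_eq fun ω => measure_ne_top _ _).symm
    _ ≤ 1 := ENNReal.toReal_le_of_le_ofReal zero_le_one (by simpa using tsum_atoms_le_one P)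

lemma abs_lowMass_sub_le (x x' : Fin n → Ω) (j : Fin n) (h : ∀ i, i ≠ j → x i = x' i) :
    |lowMass P n k x - lowMass P n k x'| ≤ 2 * (n : ℝ) ^ (-(3 : ℝ) / 4) := by
  have e : lowMass P n k x - lowMass P n k x' =
      ∑ ω ∈ ({x j, x' j} : Finset Ω), (lowMassTerm P n k x ω - lowMassTerm P n k x' ω) := by
    change (∑' ω, lowMassTerm P n k x ω) - (∑' ω, lowMassTerm P n k x' ω) = _
    rw [← (summable_lowMassTerm P n k x).tsum_sub (summable_lowMassTerm P n k x')]
    refine tsum_eq_sum fun ω hω => ?_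
    simp only [Finset.mem_insert, Finset.mem_singleton, not_or] at hω
    rw [lowMassTerm_congr P n k h hω.1 hω.2, sub_self]
  rw [e]
  calc |∑ ω ∈ ({x j, x' j} : Finset Ω), (lowMassTerm P n k x ω - lowMassTerm P n k x' ω)|
      ≤ ∑ ω ∈ ({x j, x' j} : Finset Ω), |lowMassTerm P n k x ω - lowMassTerm P n k x' ω| :=
        Finset.abs_sum_le_sum_abs _ _
    _ ≤ ∑ ω ∈ ({x j, x' j} : Finset Ω), (n : ℝ) ^ (-(3 : ℝ) / 4) := by
        refine Finset.sum_le_sum fun ω _ => ?_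
        have h1 := lowMassTerm_nonneg P n k x ω
        have h2 := lowMassTerm_nonneg P n k x' ω
        have h3 := lowMassTerm_le_rpow P n k x ω
        have h4 := lowMassTerm_le_rpow P n k x' ω
        exact abs_le.2 ⟨by linarith, by linarith⟩
    _ ≤ 2 * (n : ℝ) ^ (-(3 : ℝ) / 4) := by
        rw [Finset.sum_const, nsmul_eq_mul]
        refine mul_le_mul_of_nonneg_right ?_ (by positivity)
        exact_mod_cast Finset.card_le_two

lemma measurable_lowMassTerm (ω : Ω) : Measurable fun x => lowMassTerm P n k x ω := by
  have hcard : Measurable fun x : Fin n → Ω => (Finset.univ.filter fun i => x i = ω).card := by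
    simp_rw [Finset.card_filter]
    refine Finset.measurable_sum _ fun i _ => ?_
    have hs : MeasurableSet {x : Fin n → Ω | x i = ω} :=
      (measurable_pi_apply i : Measurable fun x : Fin n → Ω => x i) (measurableSet_singleton ω)
    exact Measurable.ite hs measurable_const measurable_const
  unfold lowMassTerm
  refine Measurable.ite ?_ measurable_const measurable_const
  exact (MeasurableSet.const _).inter
    ((MeasurableSet.const _).inter (hcard (measurableSet_singleton k)))

lemma measurable_lowMass : Measurable (lowMass P n k) := by
  have hc : (Function.support fun ω : Ω => P {ω}).Countable :=
    Summable.countable_support_ennreal (tsum_atoms_ne_top P)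
  have e : lowMass P n k = fun x =>
      (∑' ω : Function.support fun ω : Ω => P {ω}, ENNReal.ofReal (lowMassTerm P n k x ω)).toReal := by
    funext x
    rw [tsum_subtype_eq_of_support_subset (f := fun ω => ENNReal.ofReal (lowMassTerm P n k x ω)),
      ← ENNReal.ofReal_tsum_of_nonneg (lowMassTerm_nonneg P n k x) (summable_lowMassTerm P n k x),
      ENNReal.toReal_ofReal (tsum_nonneg (lowMassTerm_nonneg P n k x))]
    · rfl
    · intro ω hω h0
      have := lowMassTerm_le P n k x ω
      simp only [h0, ENNReal.toReal_zero] at this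
      exact hω (ENNReal.ofReal_of_nonpos this)
  have := hc.to_subtype
  rw [e]
  have hm : ∀ ω : Function.support fun ω : Ω => P {ω},
      Measurable fun x => ENNReal.ofReal (lowMassTerm P n k x ω) := fun ω =>
    (measurable_lowMassTerm P n k ω).ennreal_ofReal
  exact (Measurable.tsum hm).ennreal_toReal

end LowMass

/-- `n c² = 4 / √n` for `c = 2 n ^ (-3/4)`. For `n = 0` both sides vanish, the right one because
division by `0` gives `0`. -/
lemma natCast_mul_sq_diffConst (n : ℕ) :
    (n : ℝ) * (2 * (n : ℝ) ^ (-(3 : ℝ) / 4)) ^ 2 = 4 / Real.sqrt n := by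
  rcases Nat.eq_zero_or_pos n with rfl | hn
  · simp
  have hn' : (0 : ℝ) < n := by exact_mod_cast hn
  have h : (n : ℝ) * ((n : ℝ) ^ (-(3 : ℝ) / 4)) ^ 2 = (Real.sqrt n)⁻¹ := by
    rw [Real.sqrt_eq_rpow, ← Real.rpow_neg hn'.le, ← Real.rpow_natCast, ← Real.rpow_mul hn'.le]
    nth_rewrite 1 [← Real.rpow_one (n : ℝ)]
    rw [← Real.rpow_add hn']
    norm_num
  rw [mul_pow, mul_left_comm, h, div_eq_mul_inv]
  norm_num

theorem lowMass_bounded_differences_and_concentration {Ω : Type*} [MeasurableSpace Ω]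
    [MeasurableSingletonClass Ω] (P : Measure Ω) [IsProbabilityMeasure P] (n k : ℕ) :
    (∀ (x x' : Fin n → Ω) (j : Fin n), (∀ i, i ≠ j → x i = x' i) →
        |lowMass P n k x - lowMass P n k x'| ≤ 2 * (n : ℝ) ^ (-(3 : ℝ) / 4)) ∧
      ∀ ε : ℝ, 0 < ε →
        ((Measure.pi fun _ : Fin n => P)
            {x | ε ≤ |lowMass P n k x -
              ∫ x', lowMass P n k x' ∂(Measure.pi fun _ : Fin n => P)|}).toReal ≤
          2 * Real.exp (-(ε ^ 2 * Real.sqrt n) / 8) := by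
  refine ⟨abs_lowMass_sub_le P n k, fun ε hε => ?_⟩
  have hsub := hasSubgaussianMGF_of_boundedDiff P n (lowMass P n k) (measurable_lowMass P n k) 1
    (abs_lowMass_le_one P n k) (abs_lowMass_sub_le P n k)
  set μ := Measure.pi fun _ : Fin n => P
  set m := ∫ x', lowMass P n k x' ∂μ
  have h1 := hsub.measure_ge_le hε.le
  have h2 := hsub.neg.measure_ge_le hε.le
  have hexp : -ε ^ 2 / (2 * ((n * ‖2 * (n : ℝ) ^ (-(3 : ℝ) / 4)‖₊ ^ 2 : NNReal) : ℝ)) =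
      -(ε ^ 2 * Real.sqrt n) / 8 := by
    push_cast
    rw [Real.norm_eq_abs, sq_abs, natCast_mul_sq_diffConst, ← mul_div_assoc,
      div_div_eq_mul_div]
    norm_num
  rw [hexp] at h1 h2
  have hset : {x | ε ≤ |lowMass P n k x - m|} ⊆
      {x | ε ≤ lowMass P n k x - m} ∪ {x | ε ≤ (-fun x => lowMass P n k x - m) x} := by
    intro x hx
    exact le_abs.1 (show ε ≤ |lowMass P n k x - m| from hx)
  calc μ.real {x | ε ≤ |lowMass P n k x - m|} ≤ _ := measureReal_mono hset
    _ ≤ _ := measureReal_union_le _ _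
    _ ≤ 2 * Real.exp (-(ε ^ 2 * Real.sqrt n) / 8) := by linarith
end

section
/- Let P_n be a sequence of probability measures on spaces Ω_n, X^{(n)} = (X_1,...,X_n) i.i.d. ~ P_n, and suppose the scaled shadows n·P_n({X}) (X ~ P_n) converge in distribution to a nonnegative random variable Y with law Q. Then for each fixed k, the total probability ξ_k^n of all symbols appearing exactly k times converges almost surely to λ_k = ∫_0^∞ (y^k e^{−y}/k!) dQ(y), and moreover Σ_{k=0}^∞ |ξ_k^n − λ_k| → 0 almost surely. -/
/-!
Fix `k` and write `p ω = P_n {ω}`. By Fubini, `E ξ_k^n` is the `P_n`-integral of the binomial weight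
`binWeight n k (p ω)`. Binomial weights are uniformly close to Poisson weights as long as `n p` stays
bounded (`binWeight_sub_poisWeight_small`), and weak convergence of `n p` makes its large values
negligible, so `E ξ_k^n → λ_k` (`tendsto_integral_binWeight`).

For almost sure convergence, split the symbols according to whether `n p ≤ n ^ (1/4)`. Changing one
sample point moves the contribution of the light symbols by at most `2 n ^ (-3/4)`, so a
McDiarmid-type exponential moment bound (`integral_exp_le_of_bounded_diff`) gives deviation
probabilities of order `exp (-ε n ^ (1/4))`. A heavy symbol occurs exactly `k` times with probability
at most `e ^ k n ^ k exp (-n ^ (1/4))`, so Markov's inequality disposes of the rest. These bounds are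
summable in `n`, and Borel-Cantelli applies whatever the joint law of the samples
(`measureReal_abs_totalProb_sub_ge_le`). Finally `∑ ξ_k^n = ∑ λ_k = 1`, so Scheffé's lemma
(`tendsto_tsum_abs_sub_of_hasSum_one`) upgrades convergence for each `k` to convergence in `ℓ¹`.

Only symbols of positive probability, of which there are countably many, affect `ξ_k^n`; this is what
makes `ξ_k^n` a measurable function of the sample although the diagonal of `Ω_n` need not be
measurable (see `occSet`).
-/

open scoped Classical

open MeasureTheory Finset Filter

/-- The total probability `ξ_k^n`: the `P`-probability of the set of symbols
appearing exactly `k` times in the sample `x` of length `n`. -/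
noncomputable def totalProb {Ω : Type*} [MeasurableSpace Ω] (P : Measure Ω)
    (n k : ℕ) (x : Fin n → Ω) : ℝ :=
  (P {ω | (Finset.univ.filter fun i => x i = ω).card = k}).toReal

/-! ### Binomial and Poisson weights -/

/-- The binomial weight: the probability that a symbol of probability `p` occurs exactly `k` times
in a sample of length `n`. -/
noncomputable def binWeight (n k : ℕ) (p : ℝ) : ℝ :=
  (n.choose k : ℝ) * p ^ k * (1 - p) ^ (n - k)

lemma measurable_binWeight (n k : ℕ) : Measurable (binWeight n k) := by
  unfold binWeight; fun_prop

lemma binWeight_nonneg (n k : ℕ) {p : ℝ} (h0 : 0 ≤ p) (h1 : p ≤ 1) : 0 ≤ binWeight n k p := by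
  unfold binWeight
  have : 0 ≤ 1 - p := by linarith
  positivity

lemma binWeight_le_one (n k : ℕ) {p : ℝ} (h0 : 0 ≤ p) (h1 : p ≤ 1) : binWeight n k p ≤ 1 := by
  rcases lt_or_ge n k with h | h
  · simp [binWeight, Nat.choose_eq_zero_of_lt h]
  have h2 : 0 ≤ 1 - p := by linarith
  have h3 := add_pow p (1 - p) n
  rw [add_sub_cancel, one_pow] at h3
  rw [h3]
  refine le_trans (le_of_eq ?_) (Finset.single_le_sum
    (f := fun m => p ^ m * (1 - p) ^ (n - m) * (n.choose m : ℝ)) (fun i _ => by positivity)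
    (Finset.mem_range.2 (Nat.lt_succ_of_le h)))
  simp only [binWeight]; ring

/-- The Poisson weight `y ^ k e ^ {-y} / k!`. -/
noncomputable def poisWeight (k : ℕ) (y : ℝ) : ℝ :=
  y ^ k * Real.exp (-y) / (k.factorial : ℝ)

lemma continuous_poisWeight (k : ℕ) : Continuous (poisWeight k) := by
  unfold poisWeight; fun_prop

lemma poisWeight_nonneg (k : ℕ) {y : ℝ} (h : 0 ≤ y) : 0 ≤ poisWeight k y := by
  unfold poisWeight; positivity

lemma poisWeight_le_one (k : ℕ) {y : ℝ} (h : 0 ≤ y) : poisWeight k y ≤ 1 := by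
  have h1 := Real.pow_div_factorial_le_exp y h k
  calc poisWeight k y = y ^ k / (k.factorial : ℝ) * Real.exp (-y) := by
        unfold poisWeight; ring
    _ ≤ Real.exp y * Real.exp (-y) := by gcongr
    _ = 1 := by rw [← Real.exp_add]; simp

lemma hasSum_poisWeight (y : ℝ) : HasSum (fun k => poisWeight k y) 1 := by
  have h := NormedSpace.expSeries_div_hasSum_exp (𝔸 := ℝ) y
  rw [← Real.exp_eq_exp_ℝ] at h
  have h2 := h.mul_right (Real.exp (-y))
  rw [← Real.exp_add, add_neg_cancel, Real.exp_zero] at h2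
  have h3 : (fun k => poisWeight k y) = fun k : ℕ => y ^ k / (k.factorial : ℝ) * Real.exp (-y) := by
    funext k; unfold poisWeight; ring
  rw [h3]
  exact h2

lemma abs_one_sub_pow_sub_exp_le {n k : ℕ} (hk : k ≤ n) {p : ℝ} (h0 : 0 ≤ p) (h1 : p ≤ 1) :
    |(1 - p) ^ (n - k) - Real.exp (-(n * p))| ≤ n * p ^ 2 + k * p := by
  have h2 : 0 ≤ 1 - p := by linarith
  have e1 : Real.exp (-p) ≤ 1 := Real.exp_le_one_iff.2 (by linarith)
  have e0 := Real.exp_pos (-p)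
  have A : |(1 - p) ^ (n - k) - Real.exp (-p) ^ (n - k)| ≤ n * p ^ 2 := by
    have hb := Real.abs_exp_sub_one_sub_id_le (x := -p) (by rw [abs_neg, abs_of_nonneg h0]; exact h1)
    have hc := abs_pow_sub_pow_le (1 - p) (Real.exp (-p)) (n - k)
    have hd : max |1 - p| |Real.exp (-p)| ≤ 1 := by
      rw [abs_of_nonneg h2, abs_of_pos e0]; exact max_le (by linarith) e1
    have he : |(1 - p) - Real.exp (-p)| ≤ p ^ 2 := by
      rw [abs_sub_comm]
      convert hb using 1
      · congr 1; ring
      · ring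
    calc _ ≤ _ := hc
      _ ≤ p ^ 2 * n * 1 := by
        gcongr
        · exact_mod_cast Nat.sub_le n k
        · exact pow_le_one₀ (by positivity) hd
      _ = _ := by ring
  have B : |Real.exp (-p) ^ (n - k) - Real.exp (-(n * p))| ≤ k * p := by
    have hs : Real.exp (-(n * p)) = Real.exp (-p) ^ (n - k) * Real.exp (-(k * p)) := by
      rw [← Real.exp_nat_mul, ← Real.exp_add, Nat.cast_sub hk]; congr 1; ring
    have hl := Real.add_one_le_exp (-(k * p))
    have hu : Real.exp (-(k * p)) ≤ 1 := Real.exp_le_one_iff.2 (by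
      have : 0 ≤ k * p := by positivity
      linarith)
    have hq : Real.exp (-p) ^ (n - k) ≤ 1 := pow_le_one₀ e0.le e1
    have hq0 : 0 ≤ Real.exp (-p) ^ (n - k) := by positivity
    rw [hs, abs_of_nonneg (by nlinarith)]
    nlinarith
  calc _ ≤ _ := abs_sub_le _ (Real.exp (-p) ^ (n - k)) _
    _ ≤ _ := add_le_add A B

/-- The Poisson limit theorem, uniformly over bounded values of the mean `n p`. -/
lemma binWeight_sub_poisWeight_small (k : ℕ) {M : ℝ} (hM : 0 ≤ M) {ε : ℝ} (hε : 0 < ε) :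
    ∀ᶠ n : ℕ in atTop, ∀ p : ℝ, 0 ≤ p → p ≤ 1 → n * p ≤ M →
      |binWeight n k p - poisWeight k (n * p)| ≤ ε := by
  set b : ℕ → ℝ := fun n => (n.choose k : ℝ) * (1 / n : ℝ) ^ k with hb
  have hbl : Tendsto b atTop (nhds (1 / k.factorial)) := by
    have := ProbabilityTheory.tendsto_choose_mul_pow_atTop k (p := fun n => 1 / n) (r := 1) (by
      refine Tendsto.congr' ?_ tendsto_const_nhds
      filter_upwards [eventually_ge_atTop 1] with n hn
      field_simp)
    simpa [hb] using this
  have hlim : Tendsto (fun n : ℕ => M ^ k * (b n * ((M ^ 2 + k * M) * (1 / (n : ℝ)))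
      + |b n - 1 / k.factorial|)) atTop (nhds 0) := by
    have h1 := (hbl.mul ((tendsto_one_div_atTop_nhds_zero_nat (𝕜 := ℝ)).const_mul (M ^ 2 + k * M)))
    have h2 := (hbl.sub_const (1 / k.factorial : ℝ)).abs
    simpa using (h1.add h2).const_mul (M ^ k)
  filter_upwards [hlim.eventually_le_const hε, eventually_ge_atTop (max 1 k)] with n hn hnk p h0 h1 hp
  have hn1 : 1 ≤ n := (le_max_left _ _).trans hnk
  have hkn : k ≤ n := (le_max_right _ _).trans hnk
  have hnpos : (0 : ℝ) < n := by exact_mod_cast hn1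
  refine le_trans ?_ hn
  have hid : binWeight n k p - poisWeight k (n * p) = (n * p) ^ k *
      (b n * ((1 - p) ^ (n - k) - Real.exp (-(n * p)))
        + (b n - 1 / k.factorial) * Real.exp (-(n * p))) := by
    have : (n.choose k : ℝ) * p ^ k = b n * (n * p) ^ k := by
      simp only [hb, mul_pow, one_div, inv_pow]; field_simp
    rw [binWeight, this, poisWeight]; ring
  have hb0 : 0 ≤ b n := by simp only [hb]; positivity
  have he : Real.exp (-(n * p)) ≤ 1 := Real.exp_le_one_iff.2 (by
    have : 0 ≤ n * p := by positivity
    linarith)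
  have hpM : p ≤ M * (1 / n) := by rw [mul_one_div, le_div_iff₀ hnpos]; linarith
  rw [hid, abs_mul, abs_of_nonneg (by positivity : 0 ≤ (n * p) ^ k)]
  gcongr
  refine (abs_add_le _ _).trans ?_
  rw [abs_mul (b n), abs_mul (b n - _), abs_of_nonneg hb0, abs_of_pos (Real.exp_pos _)]
  gcongr
  · refine (abs_one_sub_pow_sub_exp_le hkn h0 h1).trans ?_
    have : n * p ^ 2 ≤ M * (M * (1 / n)) := by
      calc n * p ^ 2 = (n * p) * p := by ring
        _ ≤ M * (M * (1 / n)) := by gcongr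
    have : k * p ≤ k * (M * (1 / n)) := by gcongr
    linarith
  · exact mul_le_of_le_one_right (abs_nonneg _) he

/-- A symbol whose expected number of occurrences `n p` is at least `r` is very unlikely to occur
exactly `k` times. -/
lemma binWeight_le_of_le_mul {n k : ℕ} {p r : ℝ} (h0 : 0 ≤ p) (h1 : p ≤ 1) (hr : r ≤ n * p) :
    binWeight n k p ≤ Real.exp k * ((n : ℝ) ^ k * Real.exp (-r)) := by
  rcases lt_or_ge n k with h | h
  · simp only [binWeight, Nat.choose_eq_zero_of_lt h]
    simp only [Nat.cast_zero, zero_mul]; positivity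
  have h2 : 0 ≤ 1 - p := by linarith
  have hc : (n.choose k : ℝ) ≤ (n : ℝ) ^ k := by exact_mod_cast Nat.choose_le_pow n k
  have hq : (1 - p) ^ (n - k) ≤ Real.exp k * Real.exp (-r) := by
    calc (1 - p) ^ (n - k) ≤ Real.exp (-p) ^ (n - k) := by
          gcongr; linarith [Real.add_one_le_exp (-p)]
      _ = Real.exp ((n - k : ℕ) * (-p)) := by rw [Real.exp_nat_mul]
      _ ≤ Real.exp (k + -r) := by
          rw [Nat.cast_sub h]; gcongr
          have : (k : ℝ) * p ≤ k := mul_le_of_le_one_right (by positivity) h1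
          linarith
      _ = _ := Real.exp_add _ _
  calc binWeight n k p ≤ (n : ℝ) ^ k * 1 * (Real.exp k * Real.exp (-r)) := by
        unfold binWeight; gcongr; exact pow_le_one₀ h0 h1
    _ = _ := by ring

lemma summable_pow_mul_exp_neg_sqrt_sqrt (k : ℕ) {c : ℝ} (hc : 0 < c) :
    Summable fun n : ℕ => (n : ℝ) ^ k * Real.exp (-(c * √√(n : ℝ))) := by
  set m := 4 * (k + 2)
  -- `exp (-x) ≤ m! / x ^ m` leaves a multiple of `1 / n ^ 2`; the term at `n = 0` is split off
  -- because `1 / 0 ^ 2 = 0`.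
  refine (summable_nat_add_iff 1).1 ?_
  refine Summable.of_nonneg_of_le (fun n => by positivity) (fun n => ?_)
    (((summable_nat_add_iff 1).2 (Real.summable_one_div_nat_pow.2 one_lt_two)).mul_left
      ((m.factorial : ℝ) / c ^ m))
  generalize hN : n + 1 = N
  have hn : 0 < N := by omega
  clear hN
  have hn' : (0 : ℝ) < N := by exact_mod_cast hn
  have hx : 0 < c * √√(N : ℝ) := by positivity
  have h4 : (√√(N : ℝ)) ^ 4 = N := by
    rw [show 4 = 2 * 2 by norm_num, pow_mul, Real.sq_sqrt (by positivity),
      Real.sq_sqrt (by positivity)]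
  have h := Real.pow_div_factorial_le_exp _ hx.le m
  rw [mul_pow, show (√√(N : ℝ)) ^ m = (N : ℝ) ^ (k + 2) by rw [pow_mul, h4]] at h
  rw [Real.exp_neg]
  calc (N : ℝ) ^ k * (Real.exp (c * √√(N : ℝ)))⁻¹
      ≤ (N : ℝ) ^ k * (c ^ m * (N : ℝ) ^ (k + 2) / m.factorial)⁻¹ := by gcongr
    _ = _ := by field_simp; ring

/-! ### McDiarmid's inequality -/

lemma integral_pi_succ {Ω : Type*} [MeasurableSpace Ω] (P : Measure Ω) [IsProbabilityMeasure P]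
    (n : ℕ) (g : (Fin (n + 1) → Ω) → ℝ) :
    ∫ x, g x ∂(Measure.pi fun _ : Fin (n + 1) => P) =
      ∫ z : Ω × (Fin n → Ω), g (Fin.cons z.1 z.2) ∂(P.prod (Measure.pi fun _ : Fin n => P)) := by
  have h := (measurePreserving_piFinSuccAbove (fun _ : Fin (n + 1) => P) 0).symm
  rw [← h.integral_comp']
  simp only [MeasurableEquiv.piFinSuccAbove_symm_apply, Fin.insertNthEquiv, Equiv.coe_fn_mk,
    Fin.insertNth_zero]
  rfl

lemma measurable_finCons {Ω : Type*} [MeasurableSpace Ω] (n : ℕ) :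
    Measurable fun z : Ω × (Fin n → Ω) => (Fin.cons z.1 z.2 : Fin (n + 1) → Ω) := by
  refine measurable_pi_lambda _ fun i => ?_
  refine Fin.cases ?_ (fun j => ?_) i
  · simpa using measurable_fst
  · simp only [Fin.cons_succ]
    exact (measurable_pi_apply j).comp measurable_snd

/-- The exponential moment bound behind McDiarmid's inequality: a function of `n` independent
variables that moves by at most `c` when one variable is changed is sub-Gaussian with variance
proxy `n c ^ 2`. Averaging out the first variable leaves a function of the others with the same
property, and Hoeffding's lemma controls the fluctuation around that average. -/
lemma integral_exp_le_of_bounded_diff {Ω : Type*} [MeasurableSpace Ω] (P : Measure Ω)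
    [IsProbabilityMeasure P] {c : ℝ} {B : ℝ} (s : ℝ) :
    ∀ (n : ℕ) (f : (Fin n → Ω) → ℝ), Measurable f → (∀ x, |f x| ≤ B) →
      (∀ x i a, |f (Function.update x i a) - f x| ≤ c) →
      ∫ x, Real.exp (s * (f x - ∫ y, f y ∂(Measure.pi fun _ : Fin n => P)))
        ∂(Measure.pi fun _ : Fin n => P) ≤ Real.exp (n * c ^ 2 * s ^ 2 / 2) := by
  intro n
  induction n with
  | zero =>
    intro f hf hB hc
    have : f = fun _ => f (fun i => i.elim0) := by
      funext x; congr 1; exact Subsingleton.elim _ _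
    rw [this]
    simp
  | succ n ih =>
    intro f hf hB hc
    set π := Measure.pi fun _ : Fin n => P
    set F : Ω → (Fin n → Ω) → ℝ := fun a x => f (Fin.cons a x) with hF
    have hFm : Measurable (Function.uncurry F) := hf.comp (measurable_finCons n)
    have hFint : Integrable (Function.uncurry F) (P.prod π) :=
      Integrable.of_bound hFm.aestronglyMeasurable B (ae_of_all _ fun z => hB _)
    have hFa : ∀ x, Integrable (fun a => F a x) P := fun x =>
      Integrable.of_bound (hFm.comp (measurable_id.prodMk measurable_const)).aestronglyMeasurable B
        (ae_of_all _ fun z => hB _)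
    set h : (Fin n → Ω) → ℝ := fun x => ∫ a, F a x ∂P with hh
    have hhm : Measurable h := by
      exact (hFm.stronglyMeasurable.integral_prod_left' (μ := P)).measurable
    have hhB : ∀ x, |h x| ≤ B := fun x => by
      have := norm_integral_le_of_norm_le_const (μ := P) (f := fun a => F a x)
        (ae_of_all _ fun a => hB _)
      simpa using this
    have hhc : ∀ x i a, |h (Function.update x i a) - h x| ≤ c := fun x i a => by
      rw [hh]
      simp only
      rw [← integral_sub (hFa _) (hFa _)]
      have := norm_integral_le_of_norm_le_const (μ := P)
        (f := fun b => F b (Function.update x i a) - F b x) (C := c)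
        (ae_of_all _ fun b => by
          have := hc (Fin.cons b x) i.succ a
          rw [Real.norm_eq_abs]
          rwa [← Fin.cons_update] at this)
      simpa using this
    have hmean : ∫ y, f y ∂(Measure.pi fun _ : Fin (n + 1) => P) = ∫ x, h x ∂π := by
      rw [integral_pi_succ]
      exact integral_prod_symm _ hFint
    set m := ∫ x, h x ∂π with hm
    -- conditionally on the other variables, `F a x` stays within `c` of any of its values
    have hoef : ∀ x, ∫ a, Real.exp (s * (F a x - h x)) ∂P ≤ Real.exp (c ^ 2 * s ^ 2 / 2) := by
      intro x
      obtain ⟨a₀⟩ : Nonempty Ω := P.nonempty_of_neZero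
      have hs := ProbabilityTheory.hasSubgaussianMGF_of_mem_Icc (μ := P) (X := fun a => F a x)
        (a := F a₀ x - c) (b := F a₀ x + c)
        (hFm.comp (measurable_id.prodMk measurable_const)).aemeasurable
        (ae_of_all _ fun a => by
          have := hc (Fin.cons a₀ x) 0 a
          rw [Fin.update_cons_zero, abs_le] at this
          constructor <;> simp only [hF] <;> linarith)
      have := hs.mgf_le s
      simp only [ProbabilityTheory.mgf] at this
      refine this.trans (le_of_eq ?_)
      congr 1
      simp only [NNReal.coe_pow, NNReal.coe_div, coe_nnnorm, NNReal.coe_ofNat, Real.norm_eq_abs,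
        div_pow, sq_abs]
      ring
    have hexpB : ∀ u v : ℝ, |u| ≤ B → |v| ≤ B → ‖Real.exp (s * (u - v))‖ ≤ Real.exp (|s| * (2 * B)) := by
      intro u v hu hv
      rw [Real.norm_eq_abs, abs_of_pos (Real.exp_pos _)]
      refine Real.exp_le_exp.2 ((le_abs_self _).trans ?_)
      rw [abs_mul]
      gcongr
      exact (abs_sub _ _).trans (by linarith)
    have hmB : |m| ≤ B := by
      have := norm_integral_le_of_norm_le_const (μ := π) (f := h) (ae_of_all _ fun a => hhB _)
      simpa using this
    have hint1 : Integrable (fun z : Ω × (Fin n → Ω) => Real.exp (s * (F z.1 z.2 - m)))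
        (P.prod π) :=
      Integrable.of_bound (by
        have : Measurable fun z : Ω × (Fin n → Ω) => F z.1 z.2 := hFm
        exact Measurable.aestronglyMeasurable (by fun_prop)) _
        (ae_of_all _ fun z => hexpB _ _ (hB _) hmB)
    have hint2 : Integrable (fun x => Real.exp (s * (h x - m))) π :=
      Integrable.of_bound (Measurable.aestronglyMeasurable (by fun_prop)) _
        (ae_of_all _ fun z => hexpB _ _ (hhB _) hmB)
    rw [hmean, integral_pi_succ]
    have hsplit : ∀ x, ∫ a, Real.exp (s * (F a x - m)) ∂P =
        Real.exp (s * (h x - m)) * ∫ a, Real.exp (s * (F a x - h x)) ∂P := by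
      intro x
      rw [← integral_const_mul]
      congr 1
      funext a
      rw [← Real.exp_add]; congr 1; ring
    calc ∫ z : Ω × (Fin n → Ω), Real.exp (s * (F z.1 z.2 - m)) ∂(P.prod π)
        = ∫ x, ∫ a, Real.exp (s * (F a x - m)) ∂P ∂π := integral_prod_symm _ hint1
      _ = ∫ x, Real.exp (s * (h x - m)) * ∫ a, Real.exp (s * (F a x - h x)) ∂P ∂π := by
          simp_rw [hsplit]
      _ ≤ ∫ x, Real.exp (s * (h x - m)) * Real.exp (c ^ 2 * s ^ 2 / 2) ∂π := by
          refine integral_mono_of_nonneg (ae_of_all _ fun x => ?_) (hint2.mul_const _)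
            (ae_of_all _ fun x => ?_)
          · exact mul_nonneg (Real.exp_pos _).le (integral_nonneg fun _ => (Real.exp_pos _).le)
          · exact mul_le_mul_of_nonneg_left (hoef x) (Real.exp_pos _).le
      _ = (∫ x, Real.exp (s * (h x - m)) ∂π) * Real.exp (c ^ 2 * s ^ 2 / 2) :=
          integral_mul_const _ _
      _ ≤ Real.exp (n * c ^ 2 * s ^ 2 / 2) * Real.exp (c ^ 2 * s ^ 2 / 2) := by
          gcongr
          exact ih h hhm hhB hhc
      _ = _ := by rw [← Real.exp_add]; congr 1; push_cast; ring

/-- McDiarmid's inequality in Chernoff form, with the parameter `s` left free. -/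
lemma measureReal_abs_sub_ge_le {Ω : Type*} [MeasurableSpace Ω] (P : Measure Ω)
    [IsProbabilityMeasure P] {c B s ε : ℝ} (hs : 0 ≤ s) (n : ℕ) (f : (Fin n → Ω) → ℝ)
    (hf : Measurable f) (hB : ∀ x, |f x| ≤ B)
    (hc : ∀ x i a, |f (Function.update x i a) - f x| ≤ c) :
    (Measure.pi fun _ : Fin n => P).real
        {x | ε ≤ |f x - ∫ y, f y ∂(Measure.pi fun _ : Fin n => P)|} ≤
      2 * Real.exp (n * c ^ 2 * s ^ 2 / 2 - s * ε) := by
  set π := Measure.pi fun _ : Fin n => P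
  set m := ∫ y, f y ∂π with hm
  have hmB : |m| ≤ B := by
    have := norm_integral_le_of_norm_le_const (μ := π) (f := f) (ae_of_all _ fun a => hB _)
    simpa using this
  have hint : ∀ t : ℝ, Integrable (fun x => Real.exp (t * (f x - m))) π := fun t =>
    Integrable.of_bound (C := Real.exp (|t| * (2 * B)))
      (Measurable.aestronglyMeasurable (by fun_prop)) (ae_of_all _ fun x => by
        rw [Real.norm_eq_abs, abs_of_pos (Real.exp_pos _)]
        refine Real.exp_le_exp.2 ((le_abs_self _).trans ?_)
        rw [abs_mul]
        gcongr
        exact (abs_sub _ _).trans (by linarith [hB x]))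
  have h1 : π.real {x | ε ≤ f x - m} ≤ Real.exp (n * c ^ 2 * s ^ 2 / 2 - s * ε) := by
    refine (ProbabilityTheory.measure_ge_le_exp_mul_mgf ε hs (hint s)).trans ?_
    rw [show n * c ^ 2 * s ^ 2 / 2 - s * ε = -s * ε + n * c ^ 2 * s ^ 2 / 2 by ring, Real.exp_add]
    gcongr
    exact integral_exp_le_of_bounded_diff P s n f hf hB hc
  have h2 : π.real {x | f x - m ≤ -ε} ≤ Real.exp (n * c ^ 2 * s ^ 2 / 2 - s * ε) := by
    refine (ProbabilityTheory.measure_le_le_exp_mul_mgf (-ε) (neg_nonpos.2 hs)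
      (hint (-s))).trans ?_
    rw [show n * c ^ 2 * s ^ 2 / 2 - s * ε = - -s * -ε + n * c ^ 2 * s ^ 2 / 2 by ring,
      Real.exp_add]
    gcongr
    have := integral_exp_le_of_bounded_diff P (-s) n f hf hB hc
    rwa [neg_sq] at this
  have hsub : {x | ε ≤ |f x - m|} ⊆ {x | ε ≤ f x - m} ∪ {x | f x - m ≤ -ε} := by
    intro x hx
    rcases le_abs.1 (show ε ≤ |f x - m| from hx) with h | h
    · exact Or.inl h
    · exact Or.inr (show f x - m ≤ -ε by linarith)
  calc _ ≤ π.real ({x | ε ≤ f x - m} ∪ {x | f x - m ≤ -ε}) := measureReal_mono hsub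
    _ ≤ _ := measureReal_union_le _ _
    _ ≤ _ := by linarith

/-! ### Total probabilities as measurable functions of the sample -/

section Occupancy

set_option linter.unusedSectionVars false

variable {Ω : Type*} [MeasurableSpace Ω] [MeasurableSingletonClass Ω]

lemma measurableSet_count_eq (n k : ℕ) (a : Ω) :
    MeasurableSet {x : Fin n → Ω | (univ.filter fun i => x i = a).card = k} := by
  have h : Measurable fun x : Fin n → Ω => (univ.filter fun i => x i = a).card := by
    simp only [Finset.card_filter]
    refine Finset.measurable_sum _ fun i _ => ?_
    exact Measurable.ite ((measurable_pi_apply i) (measurableSet_singleton a) :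
      MeasurableSet ((fun x : Fin n → Ω => x i) ⁻¹' {a})) measurable_const measurable_const
  exact h (measurableSet_singleton k)

lemma countable_atoms (P : Measure Ω) [IsProbabilityMeasure P] :
    {ω | P.real {ω} ≠ 0}.Countable := by
  have h := Measure.countable_meas_pos_of_disjoint_iUnion (μ := P) (As := fun ω : Ω => ({ω} : Set Ω))
    (fun ω => measurableSet_singleton ω) (fun a b hab => by simpa using hab)
  refine h.mono fun ω hω => ?_
  exact pos_iff_ne_zero.2 fun h0 : P {ω} = 0 => hω (by simp [measureReal_def, h0])

/-- The number of occurrences of a symbol in an i.i.d. sample is binomial. -/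
lemma measureReal_count_eq (P : Measure Ω) [IsProbabilityMeasure P] (n k : ℕ) (a : Ω) :
    (Measure.pi fun _ : Fin n => P).real {x | (univ.filter fun i => x i = a).card = k} =
      binWeight n k (P.real {a}) := by
  have hset : {x : Fin n → Ω | (univ.filter fun i => x i = a).card = k} =
      ⋃ T ∈ powersetCard k (univ : Finset (Fin n)),
        Set.univ.pi fun i => if i ∈ T then ({a} : Set Ω) else {a}ᶜ := by
    ext x
    simp only [Set.mem_ofPred_eq, Set.mem_iUnion, mem_powersetCard, subset_univ, true_and,
      Set.mem_pi, Set.mem_univ, true_implies, exists_prop]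
    constructor
    · intro h
      refine ⟨_, h, fun i => ?_⟩
      by_cases hi : x i = a <;> simp [hi]
    · rintro ⟨T, hT, h⟩
      rw [← hT]
      congr 1
      ext i
      have := h i
      by_cases hi : i ∈ T <;> simp_all
  have hm : ∀ T : Finset (Fin n), MeasurableSet
      (Set.univ.pi fun i => if i ∈ T then ({a} : Set Ω) else {a}ᶜ) := fun T =>
    MeasurableSet.univ_pi fun i => by
      split_ifs
      · exact measurableSet_singleton a
      · exact (measurableSet_singleton a).compl
  rw [hset, measureReal_biUnion_finset ?_ fun T _ => hm T]
  · have hT : ∀ T ∈ powersetCard k (univ : Finset (Fin n)),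
        (Measure.pi fun _ : Fin n => P).real
          (Set.univ.pi fun i => if i ∈ T then ({a} : Set Ω) else {a}ᶜ) =
        P.real {a} ^ k * (1 - P.real {a}) ^ (n - k) := by
      intro T hT
      have hcard := (mem_powersetCard.1 hT).2
      rw [measureReal_def, Measure.pi_pi, ENNReal.toReal_prod]
      have : ∀ i, (P (if i ∈ T then ({a} : Set Ω) else {a}ᶜ)).toReal =
          if i ∈ T then P.real {a} else 1 - P.real {a} := by
        intro i
        split_ifs
        · rfl
        · exact probReal_compl_eq_one_sub (measurableSet_singleton a)
      simp_rw [this]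
      rw [Finset.prod_ite, prod_const, prod_const, filter_mem_eq_inter, univ_inter, hcard,
        filter_not, filter_mem_eq_inter, univ_inter, ← Finset.compl_eq_univ_sdiff,
        card_compl, Fintype.card_fin, hcard]
    rw [sum_congr rfl hT, sum_const, card_powersetCard, card_univ, Fintype.card_fin, nsmul_eq_mul,
      binWeight, mul_assoc]
  · intro T _ T' _ hne
    refine Set.disjoint_left.2 fun x hx hx' => hne ?_
    ext i
    have h1 := hx i trivial
    have h2 := hx' i trivial
    by_cases hi : i ∈ T <;> by_cases hi' : i ∈ T' <;> simp_all

/-- The pairs (sample, symbol) such that the symbol occurs exactly `k` times in the sample, where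
symbols of probability zero are counted as never occurring. The diagonal of `Ω` need not be
measurable, so the set without this convention need not be measurable; each of its sections agrees
with that of the modified set up to a null set. -/
def occSet (P : Measure Ω) (n k : ℕ) : Set ((Fin n → Ω) × Ω) :=
  {z | if P.real {z.2} = 0 then k = 0 else (univ.filter fun i => z.1 i = z.2).card = k}

/-- The contribution of the symbols of `S` to the total probability of the symbols occurring exactly
`k` times. -/
noncomputable def partProb (P : Measure Ω) (n k : ℕ) (S : Set Ω) (x : Fin n → Ω) : ℝ :=
  P.real {ω | ω ∈ S ∧ (x, ω) ∈ occSet P n k}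

variable (P : Measure Ω) [IsProbabilityMeasure P] (n k : ℕ) (S : Set Ω)

lemma measurableSet_occSet : MeasurableSet (occSet P n k) := by
  have hA := countable_atoms P
  have h : occSet P n k =
      (Set.univ ×ˢ ({ω | P.real {ω} ≠ 0}ᶜ) ∩ {_z | k = 0}) ∪
        ⋃ a ∈ {ω | P.real {ω} ≠ 0}, {x | (univ.filter fun i => x i = a).card = k} ×ˢ {a} := by
    ext ⟨x, ω⟩
    by_cases h0 : P.real {ω} = 0
    · simp only [occSet, Set.mem_ofPred_eq, h0, if_true, Set.mem_union, Set.mem_inter_iff,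
        Set.mem_prod, Set.mem_univ, Set.mem_compl_iff, ne_eq, not_true, not_false_eq_true,
        true_and, Set.mem_iUnion, Set.mem_singleton_iff, exists_prop]
      refine ⟨Or.inl, ?_⟩
      rintro (h | ⟨a, ha, -, rfl⟩)
      · exact h
      · exact absurd h0 ha
    · simp only [occSet, Set.mem_ofPred_eq, h0, if_false, Set.mem_union, Set.mem_inter_iff,
        Set.mem_prod, Set.mem_univ, Set.mem_compl_iff, ne_eq, not_true, not_false_eq_true,
        true_and, false_and, false_or, Set.mem_iUnion, Set.mem_singleton_iff, exists_prop]
      constructor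
      · intro h
        exact ⟨ω, h0, h, rfl⟩
      · rintro ⟨a, -, h, rfl⟩
        exact h
  rw [h]
  refine ((MeasurableSet.univ.prod hA.measurableSet.compl).inter (MeasurableSet.const _)).union ?_
  exact MeasurableSet.biUnion hA fun a _ =>
    (measurableSet_count_eq n k a).prod (measurableSet_singleton a)

lemma totalProb_eq_partProb (x : Fin n → Ω) : totalProb P n k x = partProb P n k Set.univ x := by
  unfold totalProb partProb
  rw [measureReal_def]
  congr 1
  refine measure_congr ?_
  have hN : P (⋃ i : {i : Fin n // P.real {x i} = 0}, {x i}) = 0 :=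
    measure_iUnion_null fun i => (measureReal_eq_zero_iff).1 i.2
  filter_upwards [compl_mem_ae_iff.2 hN] with ω hω
  refine propext ?_
  change _ ↔ (_ ∧ _)
  simp only [occSet, Set.mem_univ, true_and, Set.mem_ofPred_eq]
  by_cases h0 : P.real {ω} = 0
  · have : (univ.filter fun i => x i = ω) = ∅ := by
      refine filter_eq_empty_iff.2 fun i _ hi => hω ?_
      subst hi
      exact Set.mem_iUnion.2 ⟨⟨i, h0⟩, rfl⟩
    simp only [h0, if_true]
    change (univ.filter fun i => x i = ω).card = k ↔ _
    rw [this, card_empty, eq_comm]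
  · simp only [h0, if_false]
    rfl

variable {S} in
lemma measurableSet_section (hS : MeasurableSet S) (x : Fin n → Ω) :
    MeasurableSet {ω | ω ∈ S ∧ (x, ω) ∈ occSet P n k} :=
  hS.inter (measurable_prodMk_left (measurableSet_occSet P n k))

variable {S} in
lemma totalProb_eq_add (hS : MeasurableSet S) (x : Fin n → Ω) :
    totalProb P n k x = partProb P n k S x + partProb P n k Sᶜ x := by
  rw [totalProb_eq_partProb]
  unfold partProb
  rw [← measureReal_union ?_ (measurableSet_section P n k hS.compl x)]
  · congr 1
    ext ω
    simp only [Set.mem_ofPred_eq, Set.mem_univ, Set.mem_union, Set.mem_compl_iff]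
    tauto
  · exact Set.disjoint_left.2 fun ω h h' => h'.1 h.1

lemma partProb_nonneg (x : Fin n → Ω) : 0 ≤ partProb P n k S x := measureReal_nonneg

lemma abs_partProb_le (x : Fin n → Ω) : |partProb P n k S x| ≤ 1 := by
  rw [abs_of_nonneg (partProb_nonneg P n k S x)]
  exact measureReal_le_one

variable {S} in
lemma measurable_partProb (hS : MeasurableSet S) : Measurable (partProb P n k S) :=
  (measurable_measure_prodMk_left
    ((measurable_snd hS).inter (measurableSet_occSet P n k))).ennreal_toReal

lemma integrable_partProb {S : Set Ω} (hS : MeasurableSet S) :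
    Integrable (partProb P n k S) (Measure.pi fun _ : Fin n => P) :=
  Integrable.of_bound (measurable_partProb P n k hS).aestronglyMeasurable 1
    (ae_of_all _ fun x => abs_partProb_le P n k S x)

/-- By Fubini, the expected contribution of the symbols of `S` is the integral over `S` of the
probability that a given symbol occurs `k` times in a sample. -/
lemma integral_partProb {S : Set Ω} (hS : MeasurableSet S) :
    ∫ x, partProb P n k S x ∂(Measure.pi fun _ : Fin n => P) =
      ∫ ω in S, binWeight n k (P.real {ω}) ∂P := by
  set π := Measure.pi fun _ : Fin n => P
  have hH : MeasurableSet (Prod.snd ⁻¹' S ∩ occSet P n k : Set ((Fin n → Ω) × Ω)) :=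
    (measurable_snd hS).inter (measurableSet_occSet P n k)
  have h1 : ∫ x, partProb P n k S x ∂π = (π.prod P).real (Prod.snd ⁻¹' S ∩ occSet P n k) := by
    rw [measureReal_def, Measure.prod_apply hH, ← integral_toReal]
    · rfl
    · exact (measurable_measure_prodMk_left hH).aemeasurable
    · exact ae_of_all _ fun x => measure_lt_top _ _
  rw [h1, measureReal_def, Measure.prod_apply_symm hH, ← integral_toReal,
    ← integral_indicator hS]
  · congr 1
    funext ω
    by_cases hω : ω ∈ S
    · rw [Set.indicator_of_mem hω, ← measureReal_def]
      by_cases h0 : P.real {ω} = 0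
      · have : ((fun x => (x, ω)) ⁻¹' (Prod.snd ⁻¹' S ∩ occSet P n k) : Set (Fin n → Ω)) =
            {_x | k = 0} := by
          ext x; simp [occSet, h0, hω]
        rw [this, h0]
        by_cases hk : k = 0
        · simp [hk, binWeight]
        · simp [hk, binWeight]
      · rw [← measureReal_count_eq P n k ω]
        congr 1
        ext x; simp [occSet, h0, hω]
    · rw [Set.indicator_of_notMem hω]
      have : ((fun x => (x, ω)) ⁻¹' (Prod.snd ⁻¹' S ∩ occSet P n k) : Set (Fin n → Ω)) = ∅ := by
        ext x; simp [hω]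
      simp [this]
  · exact (measurable_measure_prodMk_right hH).aemeasurable
  · exact ae_of_all _ fun x => measure_lt_top _ _

/-- Changing one sample point affects the counts of at most two symbols. -/
lemma partProb_update_sub_le {δ : ℝ} (hδ : 0 ≤ δ) (hS : ∀ ω ∈ S, P.real {ω} ≤ δ)
    (x y : Fin n → Ω) (i : Fin n) (hxy : ∀ j, j ≠ i → x j = y j) :
    partProb P n k S x - partProb P n k S y ≤ 2 * δ := by
  have hsub : {ω | ω ∈ S ∧ (x, ω) ∈ occSet P n k} ⊆
      {ω | ω ∈ S ∧ (y, ω) ∈ occSet P n k} ∪ (({x i} ∩ S) ∪ ({y i} ∩ S)) := by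
    rintro ω ⟨hω, h⟩
    by_cases h1 : ω = x i
    · exact Or.inr (Or.inl ⟨h1, hω⟩)
    by_cases h2 : ω = y i
    · exact Or.inr (Or.inr ⟨h2, hω⟩)
    refine Or.inl ⟨hω, ?_⟩
    have : (univ.filter fun j => x j = ω) = univ.filter fun j => y j = ω := by
      refine filter_congr fun j _ => ?_
      by_cases hj : j = i
      · subst hj
        exact ⟨fun h => absurd h.symm h1, fun h => absurd h.symm h2⟩
      · rw [hxy j hj]
    simpa only [occSet, Set.mem_ofPred_eq, this] using h
  have hone : ∀ a : Ω, P.real ({a} ∩ S) ≤ δ := fun a => by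
    by_cases ha : a ∈ S
    · exact (measureReal_mono Set.inter_subset_left).trans (hS a ha)
    · rw [Set.singleton_inter_eq_empty.2 ha]; simpa using hδ
  have := calc partProb P n k S x ≤ _ := measureReal_mono (μ := P) hsub
    _ ≤ _ := measureReal_union_le _ _
    _ ≤ partProb P n k S y + (P.real ({x i} ∩ S) + P.real ({y i} ∩ S)) :=
      add_le_add le_rfl (measureReal_union_le _ _)
  linarith [hone (x i), hone (y i)]

lemma abs_partProb_update_sub_le {δ : ℝ} (hδ : 0 ≤ δ) (hS : ∀ ω ∈ S, P.real {ω} ≤ δ)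
    (x : Fin n → Ω) (i : Fin n) (a : Ω) :
    |partProb P n k S (Function.update x i a) - partProb P n k S x| ≤ 2 * δ := by
  have h : ∀ j, j ≠ i → Function.update x i a j = x j := fun j hj =>
    Function.update_of_ne hj _ _
  rw [abs_le]
  constructor
  · linarith [partProb_update_sub_le P n k S hδ hS x _ i fun j hj => (h j hj).symm]
  · exact partProb_update_sub_le P n k S hδ hS _ x i h

/-- Every symbol has exactly one number of occurrences. -/
lemma hasSum_totalProb (x : Fin n → Ω) : HasSum (fun k => totalProb P n k x) 1 := by
  have hc : Measurable fun ω : Ω => (univ.filter fun i => x i = ω).card := by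
    simp only [Finset.card_filter]
    refine Finset.measurable_sum _ fun i _ => ?_
    refine Measurable.ite ?_ measurable_const measurable_const
    convert measurableSet_singleton (x i) using 1
    ext ω
    exact eq_comm
  have hu : ∑' k, P {ω | (univ.filter fun i => x i = ω).card = k} = 1 := by
    have hd : Pairwise (Function.onFun Disjoint
        fun k : ℕ => {ω : Ω | (univ.filter fun i => x i = ω).card = k}) := fun k l hkl =>
      Set.disjoint_left.2 fun ω h h' => hkl (h.symm.trans h')
    rw [← measure_iUnion hd fun k => hc (measurableSet_singleton k), ← measure_univ (μ := P)]
    congr 1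
    ext ω
    simp
  have h := ENNReal.hasSum_toReal (f := fun k => P {ω | (univ.filter fun i => x i = ω).card = k})
    (by rw [hu]; exact ENNReal.one_ne_top)
  rw [← ENNReal.tsum_toReal_eq fun k => measure_ne_top _ _, hu, ENNReal.toReal_one] at h
  exact h

end Occupancy

/-! ### Convergence of the mean -/

/-- Poissonization of the mean: weak convergence of the scaled shadows gives tightness, so that the
uniform Poisson approximation on bounded sets suffices. -/
lemma tendsto_integral_binWeight
    (Ω : ℕ → Type*) [∀ n, MeasurableSpace (Ω n)]
    (P : ∀ n, Measure (Ω n)) [∀ n, IsProbabilityMeasure (P n)]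
    (hPmeas : ∀ n, Measurable fun ω : Ω n => (P n).real {ω})
    (Q : Measure ℝ) [IsProbabilityMeasure Q] (hQ : Q (Set.Iio 0) = 0)
    (hweak : ∀ f : BoundedContinuousFunction ℝ ℝ,
      Tendsto (fun n : ℕ => ∫ ω, f ((n : ℝ) * (P n).real {ω}) ∂(P n)) atTop
        (nhds (∫ y, f y ∂Q))) (k : ℕ) :
    Tendsto (fun n : ℕ => ∫ ω, binWeight n k ((P n).real {ω}) ∂(P n)) atTop
      (nhds (∫ y, poisWeight k y ∂Q)) := by
  have hQae : ∀ᵐ y ∂Q, 0 ≤ y := by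
    filter_upwards [compl_mem_ae_iff.2 hQ] with y hy
    exact not_lt.1 hy
  -- the Poisson weight is unbounded on the negative axis, so it is replaced there by its value at `0`
  let G : BoundedContinuousFunction ℝ ℝ := BoundedContinuousFunction.ofNormedAddCommGroup
    (fun y => poisWeight k (max y 0))
    ((continuous_poisWeight k).comp (continuous_id.max continuous_const)) 1 (fun y => by
      rw [Real.norm_eq_abs, abs_of_nonneg (poisWeight_nonneg k (le_max_right _ _))]
      exact poisWeight_le_one k (le_max_right _ _))
  have hGQ : ∫ y, G y ∂Q = ∫ y, poisWeight k y ∂Q := by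
    refine integral_congr_ae ?_
    filter_upwards [hQae] with y hy
    change poisWeight k (max y 0) = _
    rw [max_eq_left hy]
  -- continuous majorants of the indicators of `(M + 1, ∞)`
  let φ : ℕ → BoundedContinuousFunction ℝ ℝ := fun M =>
    BoundedContinuousFunction.ofNormedAddCommGroup (fun y => max 0 (min 1 (y - M)))
      (by fun_prop) 1 (fun y => by
        rw [Real.norm_eq_abs, abs_of_nonneg (le_max_left _ _)]
        exact max_le zero_le_one (min_le_left _ _))
  have hφ0 : ∀ M y, 0 ≤ φ M y := fun M y => le_max_left _ _
  have hφ1 : ∀ M y, φ M y ≤ 1 := fun M y => max_le zero_le_one (min_le_left _ _)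
  have hφge : ∀ (M : ℕ) (y : ℝ), (M : ℝ) + 1 ≤ y → 1 ≤ φ M y := fun M y h =>
    le_max_of_le_right (le_min le_rfl (by linarith))
  have hφlim : Tendsto (fun M => ∫ y, φ M y ∂Q) atTop (nhds 0) := by
    have := tendsto_integral_of_dominated_convergence (μ := Q) (F := fun M y => φ M y)
      (f := fun _ => 0) (fun _ => 1) (fun M => (φ M).continuous.aestronglyMeasurable)
      (integrable_const 1) (fun M => ae_of_all _ fun y => by
        rw [Real.norm_eq_abs, abs_of_nonneg (hφ0 M y)]; exact hφ1 M y)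
      (ae_of_all _ fun y => by
        refine tendsto_const_nhds.congr' ?_
        obtain ⟨N, hN⟩ := exists_nat_ge y
        filter_upwards [eventually_ge_atTop N] with M hM
        have : (N : ℝ) ≤ M := by exact_mod_cast hM
        exact (max_eq_left ((min_le_right _ _).trans (by linarith))).symm)
    simpa using this
  have hG := hweak G
  rw [hGQ] at hG
  have hdiff : Tendsto (fun n : ℕ => ∫ ω, binWeight n k ((P n).real {ω}) ∂(P n) -
      ∫ ω, G ((n : ℝ) * (P n).real {ω}) ∂(P n)) atTop (nhds 0) := by
    rw [Metric.tendsto_atTop']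
    intro ε hε
    obtain ⟨M, hM⟩ := (hφlim.eventually_lt_const (half_pos hε)).exists
    have e1 := (hweak (φ M)).eventually_lt_const hM
    have e2 := binWeight_sub_poisWeight_small k (M := M + 1) (by positivity) (half_pos hε)
    obtain ⟨N, hN⟩ := eventually_atTop.1 (e1.and e2)
    refine ⟨N, fun n hn => ?_⟩
    obtain ⟨h1, h2⟩ := hN n hn.le
    have hm := hPmeas n
    have hp1 : ∀ ω, (P n).real {ω} ≤ 1 := fun ω => measureReal_le_one
    have hp0 : ∀ ω, 0 ≤ (P n).real {ω} := fun ω => measureReal_nonneg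
    have hbi : Integrable (fun ω => binWeight n k ((P n).real {ω})) (P n) :=
      Integrable.of_bound ((measurable_binWeight n k).comp hm).aestronglyMeasurable 1
        (ae_of_all _ fun ω => by
          rw [Real.norm_eq_abs, abs_of_nonneg (binWeight_nonneg n k (hp0 _) (hp1 _))]
          exact binWeight_le_one n k (hp0 _) (hp1 _))
    have hbcf : ∀ f : BoundedContinuousFunction ℝ ℝ,
        Integrable (fun ω => f ((n : ℝ) * (P n).real {ω})) (P n) := fun f =>
      Integrable.of_bound
        (f.continuous.measurable.comp (hm.const_mul (n : ℝ))).aestronglyMeasurable ‖f‖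
        (ae_of_all _ fun ω => f.norm_coe_le_norm _)
    rw [dist_zero_right, ← integral_sub hbi (hbcf G)]
    calc ‖∫ ω, (binWeight n k ((P n).real {ω}) - G ((n : ℝ) * (P n).real {ω})) ∂(P n)‖
        ≤ ∫ ω, (ε / 2 + φ M ((n : ℝ) * (P n).real {ω})) ∂(P n) := by
          refine norm_integral_le_of_norm_le ((integrable_const _).add (hbcf _))
            (ae_of_all _ fun ω => ?_)
          have hnp : 0 ≤ (n : ℝ) * (P n).real {ω} := mul_nonneg (Nat.cast_nonneg n) (hp0 ω)
          have hGe : G ((n : ℝ) * (P n).real {ω}) = poisWeight k ((n : ℝ) * (P n).real {ω}) := by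
            change poisWeight k (max _ 0) = _
            rw [max_eq_left hnp]
          rw [hGe, Real.norm_eq_abs]
          rcases le_total ((n : ℝ) * (P n).real {ω}) (M + 1) with h | h
          · have := h2 _ (hp0 ω) (hp1 ω) h
            linarith [hφ0 M ((n : ℝ) * (P n).real {ω})]
          · have a1 := binWeight_nonneg n k (hp0 ω) (hp1 ω)
            have a2 := binWeight_le_one n k (hp0 ω) (hp1 ω)
            have a3 := poisWeight_nonneg k hnp
            have a4 := poisWeight_le_one k hnp
            have a5 := hφge M _ h
            rw [abs_le]; constructor <;> linarith
      _ = ε / 2 + ∫ ω, φ M ((n : ℝ) * (P n).real {ω}) ∂(P n) := by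
          rw [integral_add (integrable_const _) (hbcf _)]; simp
      _ < ε := by linarith
  simpa using hdiff.add hG

/-! ### Concentration -/

/-- Concentration of the total probability around its mean. Symbols of probability at most
`n ^ (-3/4)` contribute a quantity to which McDiarmid's inequality applies; the contribution of the
others has a tiny mean and is controlled by Markov's inequality. -/
lemma measureReal_abs_totalProb_sub_ge_le {Ω : Type*} [MeasurableSpace Ω]
    [MeasurableSingletonClass Ω] (P : Measure Ω) [IsProbabilityMeasure P]
    (hPmeas : Measurable fun ω : Ω => P.real {ω}) (n k : ℕ) {ε : ℝ} (hε : 0 < ε) :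
    (Measure.pi fun _ : Fin n => P).real
        {x | 2 * ε ≤ |totalProb P n k x - ∫ ω, binWeight n k (P.real {ω}) ∂P|} ≤
      2 * Real.exp (2 - √√(n : ℝ) * ε) +
        2 * (Real.exp k * ((n : ℝ) ^ k * Real.exp (-√√(n : ℝ)))) / ε := by
  rcases Nat.eq_zero_or_pos n with rfl | hn
  · refine measureReal_le_one.trans ?_
    have h1 : (1 : ℝ) ≤ Real.exp (2 - √√((0 : ℕ) : ℝ) * ε) := by
      rw [Real.one_le_exp_iff]; simp
    have h2 : 0 ≤ 2 * (Real.exp k * (((0 : ℕ) : ℝ) ^ k * Real.exp (-√√((0 : ℕ) : ℝ)))) / ε := by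
      positivity
    exact le_add_of_le_of_nonneg (one_le_two.trans (le_mul_of_one_le_right zero_le_two h1)) h2
  set π := Measure.pi fun _ : Fin n => P
  set r : ℝ := √√(n : ℝ) with hr
  have hn' : (0 : ℝ) < n := by exact_mod_cast hn
  have hr0 : 0 < r := by positivity
  have hr4 : r ^ 4 = n := by
    rw [hr, show 4 = 2 * 2 by norm_num, pow_mul, Real.sq_sqrt (by positivity),
      Real.sq_sqrt (by positivity)]
  set S : Set Ω := {ω | n * P.real {ω} ≤ r} with hSdef
  have hS : MeasurableSet S := measurableSet_le (hPmeas.const_mul _) measurable_const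
  have hp1 : ∀ ω, P.real {ω} ≤ 1 := fun ω => measureReal_le_one
  have hp0 : ∀ ω, 0 ≤ P.real {ω} := fun ω => measureReal_nonneg
  have hbi : Integrable (fun ω => binWeight n k (P.real {ω})) P :=
    Integrable.of_bound ((measurable_binWeight n k).comp hPmeas).aestronglyMeasurable 1
      (ae_of_all _ fun ω => by
        rw [Real.norm_eq_abs, abs_of_nonneg (binWeight_nonneg n k (hp0 _) (hp1 _))]
        exact binWeight_le_one n k (hp0 _) (hp1 _))
  set U := partProb P n k S
  set V := partProb P n k Sᶜ
  set v := ∫ x, V x ∂π with hv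
  have hmean : ∫ ω, binWeight n k (P.real {ω}) ∂P = ∫ x, U x ∂π + v := by
    rw [hv, integral_partProb P n k hS, integral_partProb P n k hS.compl,
      integral_add_compl hS hbi]
  have hVint : Integrable V π := integrable_partProb P n k hS.compl
  have hV0 : ∀ x, 0 ≤ V x := partProb_nonneg P n k Sᶜ
  have hv0 : 0 ≤ v := integral_nonneg hV0
  have hvle : v ≤ Real.exp k * ((n : ℝ) ^ k * Real.exp (-r)) := by
    set C := Real.exp k * ((n : ℝ) ^ k * Real.exp (-r))
    have hC : 0 ≤ C := by positivity
    rw [hv, integral_partProb P n k hS.compl]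
    calc ∫ ω in Sᶜ, binWeight n k (P.real {ω}) ∂P ≤ ∫ _ω in Sᶜ, C ∂P := by
          refine setIntegral_mono_on hbi.integrableOn (integrable_const _) hS.compl fun ω hω => ?_
          exact binWeight_le_of_le_mul (hp0 ω) (hp1 ω) (not_le.1 (show ¬ n * P.real {ω} ≤ r from hω)).le
      _ = P.real Sᶜ * C := by rw [setIntegral_const, smul_eq_mul]
      _ ≤ C := mul_le_of_le_one_left hC measureReal_le_one
  -- with `c = 2 r / n` and `s = r` the exponent `n c ^ 2 s ^ 2 / 2` equals `2`
  have hU : π.real {x | ε ≤ |U x - ∫ y, U y ∂π|} ≤ 2 * Real.exp (2 - r * ε) := by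
    have := measureReal_abs_sub_ge_le P (c := 2 * (r / n)) (B := 1) (s := r) (ε := ε) hr0.le n U
      (measurable_partProb P n k hS) (abs_partProb_le P n k S)
      (abs_partProb_update_sub_le P n k S (by positivity) fun ω hω => by
        rw [le_div_iff₀ hn', mul_comm]; exact hω)
    have he : (n : ℝ) * (2 * (r / n)) ^ 2 * r ^ 2 / 2 = 2 := by
      field_simp
      linear_combination hr4
    rwa [he] at this
  have hVm : π.real {x | ε ≤ V x + v} ≤ 2 * v / ε := by
    have h := mul_meas_ge_le_integral_of_nonneg (μ := π) (f := fun x => V x + v)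
      (ae_of_all _ fun x => add_nonneg (hV0 x) hv0) (hVint.add (integrable_const v)) ε
    rw [integral_add hVint (integrable_const v), integral_const, ← hv] at h
    rw [le_div_iff₀ hε, mul_comm]
    simpa [two_mul] using h
  have hsub : {x | 2 * ε ≤ |totalProb P n k x - ∫ ω, binWeight n k (P.real {ω}) ∂P|} ⊆
      {x | ε ≤ |U x - ∫ y, U y ∂π|} ∪ {x | ε ≤ V x + v} := by
    intro x hx
    by_contra hcon
    simp only [Set.mem_union, Set.mem_ofPred_eq, not_or, not_le] at hcon
    have hx' : 2 * ε ≤ |totalProb P n k x - ∫ ω, binWeight n k (P.real {ω}) ∂P| := hx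
    rw [hmean, totalProb_eq_add P n k hS x,
      show U x + V x - (∫ x, U x ∂π + v) = (U x - ∫ x, U x ∂π) + (V x - v) by ring] at hx'
    have h1 := abs_add_le (U x - ∫ x, U x ∂π) (V x - v)
    have h2 : |V x - v| ≤ V x + v := by
      rw [abs_le]; constructor <;> linarith [hV0 x]
    linarith [hcon.1, hcon.2]
  calc _ ≤ _ := measureReal_mono (μ := π) hsub
    _ ≤ _ := measureReal_union_le _ _
    _ ≤ 2 * Real.exp (2 - r * ε) + 2 * v / ε := add_le_add hU hVm
    _ ≤ _ := by gcongr

/-! ### Almost sure convergence -/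

/-- Scheffé's lemma for sequences. -/
lemma tendsto_tsum_abs_sub_of_hasSum_one {a : ℕ → ℕ → ℝ} {b : ℕ → ℝ}
    (ha0 : ∀ n k, 0 ≤ a n k) (ha : ∀ n, HasSum (a n) 1) (hb : HasSum b 1)
    (h : ∀ k, Tendsto (fun n => a n k) atTop (nhds (b k))) :
    Tendsto (fun n => ∑' k, |a n k - b k|) atTop (nhds 0) := by
  have hb0 : ∀ k, 0 ≤ b k := fun k => ge_of_tendsto' (h k) fun n => ha0 n k
  -- as the two sums agree, `∑ |a - b| = 2 ∑ (b - a)⁺`, and `(b - a)⁺ ≤ b` gives domination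
  have hle : ∀ n k, max (b k - a n k) 0 ≤ b k := fun n k =>
    max_le (by linarith [ha0 n k]) (hb0 k)
  have hs : ∀ n, Summable fun k => max (b k - a n k) 0 := fun n =>
    Summable.of_nonneg_of_le (fun k => le_max_right _ _) (hle n) hb.summable
  have heq : ∀ n, ∑' k, |a n k - b k| = 2 * ∑' k, max (b k - a n k) 0 := by
    intro n
    have h1 : (fun k => |a n k - b k|) = fun k => 2 * max (b k - a n k) 0 + (a n k - b k) := by
      funext k
      rcases le_total (a n k) (b k) with hk | hk
      · rw [abs_of_nonpos (by linarith), max_eq_left (by linarith)]; ring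
      · rw [abs_of_nonneg (by linarith), max_eq_right (by linarith)]; ring
    have h2 := ((hs n).hasSum.mul_left 2).add ((ha n).sub hb)
    rw [h1, h2.tsum_eq]; ring
  simp_rw [heq]
  have hlim : Tendsto (fun n => ∑' k, max (b k - a n k) 0) atTop (nhds (∑' _k : ℕ, (0 : ℝ))) := by
    refine tendsto_tsum_of_dominated_convergence hb.summable (fun k => ?_)
      (Eventually.of_forall fun n k => ?_)
    · simpa using ((h k).const_sub (b k)).max (tendsto_const_nhds (x := (0 : ℝ)))
    · rw [Real.norm_eq_abs, abs_of_nonneg (le_max_right _ _)]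
      exact hle n k
  simpa using hlim.const_mul 2

theorem total_probability_convergence
    (Ω : ℕ → Type*) [∀ n, MeasurableSpace (Ω n)]
    [∀ n, MeasurableSingletonClass (Ω n)]
    (P : ∀ n, Measure (Ω n)) [∀ n, IsProbabilityMeasure (P n)]
    (hPmeas : ∀ n, Measurable fun ω : Ω n => ((P n) {ω}).toReal)
    (Q : Measure ℝ) [IsProbabilityMeasure Q] (hQ : Q (Set.Iio 0) = 0)
    (hweak : ∀ f : BoundedContinuousFunction ℝ ℝ,
      Tendsto (fun n : ℕ => ∫ ω, f ((n : ℝ) * ((P n) {ω}).toReal) ∂(P n)) atTop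
        (nhds (∫ y, f y ∂Q)))
    {Θ : Type*} [MeasurableSpace Θ] (μ : Measure Θ) [IsProbabilityMeasure μ]
    (X : ∀ n : ℕ, Θ → Fin n → Ω n) (hXmeas : ∀ n, Measurable (X n))
    (hXlaw : ∀ n, μ.map (X n) = Measure.pi fun _ : Fin n => P n) :
    (∀ k : ℕ, ∀ᵐ θ ∂μ,
        Tendsto (fun n : ℕ => totalProb (P n) n k (X n θ)) atTop
          (nhds (∫ y, y ^ k * Real.exp (-y) / (k.factorial : ℝ) ∂Q))) ∧
      ∀ᵐ θ ∂μ,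
        Tendsto
          (fun n : ℕ => ∑' k : ℕ,
            |totalProb (P n) n k (X n θ) -
              ∫ y, y ^ k * Real.exp (-y) / (k.factorial : ℝ) ∂Q|)
          atTop (nhds 0) := by
  have hA : ∀ k : ℕ, ∀ᵐ θ ∂μ, Tendsto (fun n : ℕ => totalProb (P n) n k (X n θ)) atTop
      (nhds (∫ y, poisWeight k y ∂Q)) := by
    intro k
    have hmean := tendsto_integral_binWeight Ω P hPmeas Q hQ hweak k
    set m : ℕ → ℝ := fun n => ∫ ω, binWeight n k ((P n).real {ω}) ∂(P n) with hm
    have hBC : ∀ j : ℕ, ∀ᵐ θ ∂μ, ∀ᶠ n : ℕ in atTop,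
        |totalProb (P n) n k (X n θ) - m n| < 2 * (1 / ((j : ℝ) + 1)) := by
      intro j
      have hε : 0 < 1 / ((j : ℝ) + 1) := by positivity
      set ε := 1 / ((j : ℝ) + 1)
      set A : ∀ n : ℕ, Set (Fin n → Ω n) := fun n => {x | 2 * ε ≤ |totalProb (P n) n k x - m n|}
      set u : ℕ → ℝ := fun n => 2 * Real.exp (2 - √√(n : ℝ) * ε) +
        2 * (Real.exp k * ((n : ℝ) ^ k * Real.exp (-√√(n : ℝ)))) / ε
      have hu : Summable u := by
        refine Summable.add ?_ ?_
        · have := (summable_pow_mul_exp_neg_sqrt_sqrt 0 hε).mul_left (2 * Real.exp 2)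
          refine this.congr fun n => ?_
          rw [pow_zero, one_mul, mul_assoc, ← Real.exp_add]
          congr 2; ring
        · have := (summable_pow_mul_exp_neg_sqrt_sqrt k one_pos).mul_left (2 * Real.exp k / ε)
          refine this.congr fun n => ?_
          rw [one_mul]; ring
      have hle : ∀ n, μ (X n ⁻¹' A n) ≤ ENNReal.ofReal (u n) := fun n => by
        have h1 := Measure.le_map_apply (μ := μ) (hXmeas n).aemeasurable (A n)
        rw [hXlaw n] at h1
        refine h1.trans ?_
        rw [← ofReal_measureReal]
        exact ENNReal.ofReal_le_ofReal
          (measureReal_abs_totalProb_sub_ge_le (P n) (hPmeas n) n k hε)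
      have hfin : ∑' n, μ (X n ⁻¹' A n) ≠ ⊤ :=
        ne_top_of_le_ne_top hu.tsum_ofReal_ne_top (ENNReal.tsum_le_tsum hle)
      filter_upwards [ae_eventually_notMem hfin] with θ hθ
      filter_upwards [hθ] with n hn
      exact not_le.1 hn
    filter_upwards [ae_all_iff.2 hBC] with θ hθ
    have hz : Tendsto (fun n => totalProb (P n) n k (X n θ) - m n) atTop (nhds 0) := by
      refine Metric.tendsto_nhds.2 fun ε hε => ?_
      obtain ⟨j, hj⟩ := exists_nat_one_div_lt (half_pos hε)
      filter_upwards [hθ j] with n hn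
      rw [dist_zero_right, Real.norm_eq_abs]
      linarith
    simpa using hz.add hmean
  refine ⟨hA, ?_⟩
  have hQae : ∀ᵐ y ∂Q, 0 ≤ y := by
    filter_upwards [compl_mem_ae_iff.2 hQ] with y hy
    exact not_lt.1 hy
  have hsum : HasSum (fun k => ∫ y, poisWeight k y ∂Q) 1 := by
    have := hasSum_integral_of_dominated_convergence (μ := Q) (F := fun k y => poisWeight k y)
      (f := fun _ => 1) (fun k y => poisWeight k y)
      (fun k => (continuous_poisWeight k).aestronglyMeasurable)
      (fun k => by
        filter_upwards [hQae] with y hy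
        rw [Real.norm_eq_abs, abs_of_nonneg (poisWeight_nonneg k hy)])
      (ae_of_all _ fun y => (hasSum_poisWeight y).summable)
      (by simp_rw [fun y => (hasSum_poisWeight y).tsum_eq]; exact integrable_const _)
      (ae_of_all _ hasSum_poisWeight)
    simpa using this
  filter_upwards [ae_all_iff.2 hA] with θ hθ
  exact tendsto_tsum_abs_sub_of_hasSum_one (fun n k => ENNReal.toReal_nonneg)
    (fun n => hasSum_totalProb (P n) n (X n θ)) hsum hθ
end
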